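/- Let η ∈ (0,1) and α > 1 be constants, set ξ := (1 − 1/α)/10, let p : ℕ → ℝ satisfy 0 < p(n) ≤ 1 − η and log(1/p(n))/log n → 0, and let h < 1 be a constant. For a partial coloring 𝒞 = (C_1, …, C_k) of a graph G on Fin n (a tuple of pairwise disjoint vertex sets), let A(v,𝒞) := {i ∈ {1,…,k} : N(v) ∩ C_i = ∅}, a(v,𝒞) := |A(v,𝒞)|, call a color i active if there exists an uncolored vertex v (i.e. v ∉ C_1 ∪ … ∪ C_k) with i ∈ A(v,𝒞), let ℓ(𝒞) := min{|C_i| : i active}, and let B(h,𝒞) := {v ∈ V : a(v,𝒞) < β(h)/2}. Let ℰ_n be the event that the random graph G_{n,p(n)} admits a partial coloring 𝒞 with at least one active color such that ℓ(𝒞) ≤ (h − ξ)·log_b(np), |B(h,𝒞)| ≥ γ(h), and at least (ξ/10)·k of the color classes C_i satisfy |C_i| ≤ ℓ(𝒞) + ξ·log_b(np). Then the probability of ℰ_n tends to 0 as n → ∞. -/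

import Mathlib

open MeasureTheory Filter


abbrev EdgeIdx (n : ℕ) := {e : Sym2 (Fin n) // ¬ e.IsDiag}

noncomputable def bernoulliBool (p : ℝ) : Measure Bool :=
  ENNReal.ofReal p • Measure.dirac true + ENNReal.ofReal (1 - p) • Measure.dirac false

noncomputable def erMeasure (n : ℕ) (p : ℝ) : Measure (EdgeIdx n → Bool) :=
  Measure.pi fun _ => bernoulliBool p

def erGraph (n : ℕ) (ω : EdgeIdx n → Bool) : SimpleGraph (Fin n) where
  Adj u v := u ≠ v ∧ ∀ h : ¬ (s(u, v) : Sym2 (Fin n)).IsDiag, ω ⟨s(u, v), h⟩ = true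
  symm := by
    constructor
    rintro u v ⟨hne, h⟩
    refine ⟨hne.symm, fun hd => ?_⟩
    have hs : (s(v, u) : Sym2 (Fin n)) = s(u, v) := Sym2.eq_swap
    have hd' : ¬ (s(u, v) : Sym2 (Fin n)).IsDiag := by rw [← hs]; exact hd
    exact (congrArg ω (Subtype.ext hs)).trans (h hd')
  loopless := by constructor; rintro u ⟨h, -⟩; exact h rfl

/-- `log_b(np)` with `b = 1/(1-p)`. -/
noncomputable def logbNP (n : ℕ) (p : ℝ) : ℝ :=
  Real.log (n * p) / Real.log (1 / (1 - p))

/-- `β(h) = α·ξ·n·(np)^{-h} / (10·log_b(np))`. -/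
noncomputable def betaKS (α ξ h : ℝ) (n : ℕ) (p : ℝ) : ℝ :=
  α * ξ * n * ((n : ℝ) * p) ^ (-h) / (10 * logbNP n p)

/-- `γ(h) = 10·n·log n / β(h)`. -/
noncomputable def gammaKS (α ξ h : ℝ) (n : ℕ) (p : ℝ) : ℝ :=
  10 * n * Real.log n / betaKS α ξ h n p

/-!
Fix a partial coloring with color classes `C i` and a set `B` of `⌈γ⌉` vertices. For `v ∈ B` and
`i` ranging over the classes of size at most `h * log_b(np)` that are disjoint from `B`, the events
that color `i` is available at `v` depend on disjoint sets of potential edges, hence are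
independent, and each has probability at least `(1 - p) ^ (h * log_b(np)) = (np) ^ (-h)`. At most
`|B|` classes meet `B`, because the classes are disjoint. If every `v ∈ B` is dangerous, at most
`γβ / 2` of these events occur, whereas about `γ * (ξ / 10) * k * (np) ^ (-h) = γβ = 10 * n * log n`
are expected; by Chernoff this has probability at most `exp (-1.4 * n * log n)`. There are at most
`(2 * (k + 1)) ^ n ≤ n ^ n` pairs of a partial coloring and a set `B`, so a union bound concludes.

That discarding the classes meeting `B` is harmless means `γ ≪ (ξ / 10) * k`. Up to powers of
`log n`, `γ / k` is at most `n * (np) ^ (h - 2)`, so this holds as soon as `p ≥ n ^ (-ε)` with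
`1 < (1 - ε) * (2 - h)`, that is, `(2 - h) * ε < 1 - h`; such an `ε > 0` exists because `h < 1`.
-/

open ProbabilityTheory Topology

section Chernoff

variable {Ω : Type*} [MeasurableSpace Ω] {μ : Measure Ω}

theorem mgf_indicator_one [IsProbabilityMeasure μ] {A : Set Ω} (hA : MeasurableSet A) (t : ℝ) :
    mgf (A.indicator fun _ => 1) μ t = 1 - (1 - Real.exp t) * μ.real A := by
  have hexp : (fun ω => Real.exp (t * A.indicator (fun _ => (1 : ℝ)) ω)) =
      fun ω => 1 - A.indicator (fun _ => 1 - Real.exp t) ω := by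
    funext ω
    by_cases hω : ω ∈ A <;> simp [hω]
  rw [mgf, hexp, integral_sub (integrable_const 1) ((integrable_const _).indicator hA),
    integral_indicator_const _ hA]
  simp [mul_comm]

theorem mgf_indicator_one_le_exp [IsProbabilityMeasure μ] {A : Set Ω} (hA : MeasurableSet A)
    {q s : ℝ} (hs : 0 ≤ s) (hq : q ≤ μ.real A) :
    mgf (A.indicator fun _ => 1) μ (-s) ≤ Real.exp (-((1 - Real.exp (-s)) * q)) := by
  have hs' : 0 ≤ 1 - Real.exp (-s) := by simpa using hs
  rw [mgf_indicator_one hA]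
  calc 1 - (1 - Real.exp (-s)) * μ.real A
      ≤ -((1 - Real.exp (-s)) * q) + 1 := by linarith [mul_le_mul_of_nonneg_left hq hs']
    _ ≤ Real.exp (-((1 - Real.exp (-s)) * q)) := Real.add_one_le_exp _

theorem measureReal_ncard_le_le_exp {ι : Type*} [Finite ι] {A : ι → Set Ω}
    (hA : ∀ i, MeasurableSet (A i)) (hind : iIndepSet A μ) {q s : ℝ} (hs : 0 ≤ s)
    (hq : ∀ i, q ≤ μ.real (A i)) (r : ℝ) :
    μ.real {ω | ({i | ω ∈ A i}.ncard : ℝ) ≤ r} ≤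
      Real.exp (s * r - (1 - Real.exp (-s)) * q * Nat.card ι) := by
  classical
  cases nonempty_fintype ι
  have := hind.isProbabilityMeasure
  let X : ι → Ω → ℝ := fun i => (A i).indicator fun _ => 1
  have hX : ∀ i, Measurable (X i) := fun i => measurable_const.indicator (hA i)
  have hcount : ∀ ω, ({i | ω ∈ A i}.ncard : ℝ) = (∑ i, X i) ω := fun ω => by
    simp [X, Set.indicator_apply, Set.ncard_eq_toFinset_card']
  have hint : Integrable (fun ω => Real.exp (-s * (∑ i, X i) ω)) μ :=
    hind.iIndepFun_indicator.integrable_exp_mul_sum hX fun i _ =>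
      integrable_exp_mul_of_mem_Icc (hX i).aemeasurable (a := 0) (b := 1)
        (.of_forall fun ω => ⟨Set.indicator_nonneg (fun _ _ => zero_le_one) ω,
          Set.indicator_le_self' (fun _ _ => zero_le_one) ω⟩)
  simp only [hcount]
  calc μ.real {ω | (∑ i, X i) ω ≤ r}
      ≤ Real.exp (-(-s) * r) * mgf (∑ i, X i) μ (-s) :=
        measure_le_le_exp_mul_mgf r (neg_nonpos.2 hs) hint
    _ ≤ Real.exp (-(-s) * r) * Real.exp (-((1 - Real.exp (-s)) * q)) ^ Nat.card ι := by
        rw [hind.iIndepFun_indicator.mgf_sum hX]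
        gcongr
        exact (Finset.prod_le_prod (fun _ _ => mgf_nonneg) fun i _ =>
          mgf_indicator_one_le_exp (hA i) hs (hq i)).trans_eq (by simp [Nat.card_eq_fintype_card])
    _ = Real.exp (s * r - (1 - Real.exp (-s)) * q * Nat.card ι) := by
        rw [← Real.exp_nat_mul, ← Real.exp_add]
        ring_nf

end Chernoff

section Bernoulli

variable {p : ℝ}

theorem isProbabilityMeasure_bernoulliBool (hp0 : 0 ≤ p) (hp1 : p ≤ 1) :
    IsProbabilityMeasure (bernoulliBool p) where
  measure_univ := by
    simp [bernoulliBool, ← ENNReal.ofReal_add hp0 (sub_nonneg.2 hp1)]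

variable {ι : Type*} [Fintype ι]

theorem measure_pi_bernoulliBool_forall_eq_false (hp0 : 0 ≤ p) (hp1 : p ≤ 1) (E : Finset ι) :
    Measure.pi (fun _ : ι => bernoulliBool p) {ω | ∀ e ∈ E, ω e = false} =
      ENNReal.ofReal (1 - p) ^ E.card := by
  have := isProbabilityMeasure_bernoulliBool hp0 hp1
  calc Measure.pi (fun _ : ι => bernoulliBool p) {ω | ∀ e ∈ E, ω e = false}
      = Measure.pi (fun _ : ι => bernoulliBool p) (Set.pi E fun _ => {false}) := rfl
    _ = ENNReal.ofReal (1 - p) ^ E.card := by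
        rw [Measure.pi_pi_finset]
        simp [bernoulliBool]

theorem iIndepSet_forall_eq_false (hp0 : 0 ≤ p) (hp1 : p ≤ 1) {κ : Type*} {E : κ → Finset ι}
    (hE : Pairwise (Function.onFun Disjoint E)) :
    iIndepSet (fun j => {ω : ι → Bool | ∀ e ∈ E j, ω e = false})
      (Measure.pi fun _ => bernoulliBool p) := by
  classical
  refine (iIndepSet_iff_meas_biInter fun j => Set.Finite.measurableSet (Set.toFinite _)).2
    fun S => ?_
  have hInter : ⋂ j ∈ S, {ω : ι → Bool | ∀ e ∈ E j, ω e = false} =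
      {ω | ∀ e ∈ S.biUnion E, ω e = false} := by
    ext ω
    simp only [Set.mem_iInter, Set.mem_ofPred_eq, Finset.mem_biUnion]
    grind
  simp only [hInter, measure_pi_bernoulliBool_forall_eq_false hp0 hp1,
    Finset.card_biUnion fun _ _ _ _ hij => hE hij, Finset.prod_pow_eq_pow_sum]

end Bernoulli

section PartialColoring

variable {V ι : Type*} (C : ι → Finset V)

/-- The set `A(v, 𝒞)` of colors available at `v`: those whose color class contains no neighbor
of `v`. -/
def availableColors (G : SimpleGraph V) (v : V) : Set ι := {i | ∀ u ∈ C i, ¬ G.Adj v u}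

/-- The set of vertices with fewer than `t` available colors; it is `B(h, 𝒞)` for
`t = β(h) / 2`. -/
def dangerousVertices (G : SimpleGraph V) (t : ℝ) : Set V :=
  {v | ((availableColors C G v).ncard : ℝ) < t}

/-- The colors whose class has at most `s` vertices. -/
def smallColors (s : ℝ) : Set ι := {i | ((C i).card : ℝ) ≤ s}

theorem smallColors_mono {s s' : ℝ} (hs : s ≤ s') : smallColors C s ⊆ smallColors C s' :=
  fun _ hi => le_trans hi hs

variable {C}

theorem ncard_not_disjoint_le_card [Finite ι] (hC : Pairwise (Function.onFun Disjoint C))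
    (B : Finset V) : {i | ¬ Disjoint B (C i)}.ncard ≤ B.card := by
  classical
  cases nonempty_fintype ι
  rw [Set.ncard_eq_toFinset_card']
  refine Finset.card_le_card_of_forall_subsingleton (fun i v => v ∈ C i) (fun i hi => ?_)
    fun v _ i hi j hj => ?_
  · exact Finset.not_disjoint_iff.1 (Set.mem_toFinset.1 hi)
  · by_contra hne
    exact Finset.disjoint_left.1 (hC hne) hi.2 hj.2

theorem sub_card_le_ncard_smallColors_inter_disjoint [Finite ι]
    (hC : Pairwise (Function.onFun Disjoint C)) (B : Finset V) (s : ℝ) :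
    ((smallColors C s).ncard : ℝ) - B.card ≤ (smallColors C s ∩ {i | Disjoint B (C i)}).ncard := by
  have hdiff : smallColors C s ∩ {i | Disjoint B (C i)} =
      smallColors C s \ {i | ¬ Disjoint B (C i)} := by
    ext i
    simp
  have hsub : (smallColors C s).ncard - {i | ¬ Disjoint B (C i)}.ncard ≤
      (smallColors C s \ {i | ¬ Disjoint B (C i)}).ncard :=
    Set.le_ncard_sdiff _ _ (Set.toFinite _)
  have hB := ncard_not_disjoint_le_card hC B
  rw [hdiff, sub_le_iff_le_add]
  exact_mod_cast (by lia)

theorem ncard_mem_availableColors_le [Finite ι] {G : SimpleGraph V} {t : ℝ} {B : Finset V}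
    (hB : ↑B ⊆ dangerousVertices C G t) (D : Set ι) :
    ({x : B × D | ↑x.2 ∈ availableColors C G x.1}.ncard : ℝ) ≤ B.card * t := by
  classical
  cases nonempty_fintype ι
  have hfiber (v : B) : ({i : D | ↑i ∈ availableColors C G v}.ncard : ℝ) ≤ t := by
    refine le_trans (Nat.cast_le.2 ?_) (hB v.2).le
    exact Set.ncard_le_ncard_of_injOn Subtype.val (fun _ hi => hi) Subtype.val_injective.injOn
  calc ({x : B × D | ↑x.2 ∈ availableColors C G x.1}.ncard : ℝ)
      = ∑ v : B, ({i : D | ↑i ∈ availableColors C G v}.ncard : ℝ) := by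
        simp only [Set.ncard_eq_toFinset_card', Set.toFinset_ofPred, Finset.card_filter]
        push_cast
        exact Fintype.sum_prod_type _
    _ ≤ ∑ _v : B, t := Finset.sum_le_sum fun v _ => hfiber v
    _ = B.card * t := by simp

/-- The color classes of a partial coloring given as a function, `none` meaning uncolored. -/
def colorClass [Fintype V] [DecidableEq ι] (c : V → Option ι) (i : ι) :
    Finset V := {v | c v = some i}

theorem pairwise_disjoint_colorClass [Fintype V] [DecidableEq ι] (c : V → Option ι) :
    Pairwise (Function.onFun Disjoint (colorClass c)) := by
  intro i j hij
  simp only [Function.onFun, colorClass, Finset.disjoint_left, Finset.mem_filter_univ]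
  grind

theorem exists_colorClass_eq [Fintype V] [DecidableEq ι]
    (hC : Pairwise (Function.onFun Disjoint C)) : ∃ c : V → Option ι, colorClass c = C := by
  classical
  refine ⟨fun v => if hv : ∃ i, v ∈ C i then some hv.choose else none, ?_⟩
  ext i v
  simp only [colorClass, Finset.mem_filter_univ]
  refine ⟨fun hv => ?_, fun hv => ?_⟩
  · split_ifs at hv with hex
    exact Option.some.inj hv ▸ hex.choose_spec
  · have hex : ∃ i, v ∈ C i := ⟨i, hv⟩
    rw [dif_pos hex, Option.some_inj]
    by_contra hne
    exact Finset.disjoint_left.1 (hC hne) hex.choose_spec hv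

end PartialColoring

section RandomGraph

variable {n : ℕ} {p : ℝ}

/-- The potential edges joining `v` to a vertex of `S` (with the non-edge `s(v, v)` removed when
`v ∈ S`). -/
def edgesTo (v : Fin n) (S : Finset (Fin n)) : Finset (EdgeIdx n) :=
  (S.image fun u => s(v, u)).subtype _

theorem card_edgesTo_le (v : Fin n) (S : Finset (Fin n)) : (edgesTo v S).card ≤ S.card := by
  rw [edgesTo, Finset.card_subtype]
  exact (Finset.card_filter_le _ _).trans Finset.card_image_le

theorem forall_not_adj_erGraph_iff (ω : EdgeIdx n → Bool) (v : Fin n) (S : Finset (Fin n)) :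
    (∀ u ∈ S, ¬ (erGraph n ω).Adj v u) ↔ ∀ e ∈ edgesTo v S, ω e = false := by
  simp only [edgesTo, Finset.mem_subtype, Finset.mem_image]
  refine ⟨?_, fun hfalse u hu ⟨hvu, hadj⟩ => ?_⟩
  · rintro hadj ⟨e, hdiag⟩ ⟨u, hu, rfl⟩
    by_contra htrue
    exact hadj u hu ⟨fun hvu => hdiag hvu, fun _ => Bool.eq_true_of_not_eq_false htrue⟩
  · have hdiag : ¬ (s(v, u) : Sym2 (Fin n)).IsDiag := hvu
    exact Bool.false_ne_true ((hfalse ⟨s(v, u), hdiag⟩ ⟨u, hu, rfl⟩).symm.trans (hadj hdiag))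

theorem disjoint_edgesTo {v w : Fin n} {S T : Finset (Fin n)} (hvT : v ∉ T)
    (hST : v = w → Disjoint S T) : Disjoint (edgesTo v S) (edgesTo w T) := by
  simp only [edgesTo, Finset.disjoint_left, Finset.mem_subtype, Finset.mem_image]
  rintro e ⟨u, huS, hu⟩ ⟨u', huT, hu'⟩
  rcases Sym2.eq_iff.1 (hu.trans hu'.symm) with ⟨hvw, rfl⟩ | ⟨rfl, -⟩
  · exact Finset.disjoint_left.1 (hST hvw) huS huT
  · exact hvT huT

theorem isProbabilityMeasure_erMeasure (hp0 : 0 ≤ p) (hp1 : p ≤ 1) :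
    IsProbabilityMeasure (erMeasure n p) := by
  have := isProbabilityMeasure_bernoulliBool hp0 hp1
  unfold erMeasure
  infer_instance

theorem le_measureReal_mem_availableColors {ι : Type*} (C : ι → Finset (Fin n)) (i : ι)
    (hp0 : 0 ≤ p) (hp1 : p ≤ 1) (v : Fin n) :
    (1 - p) ^ (C i).card ≤ (erMeasure n p).real {ω | i ∈ availableColors C (erGraph n ω) v} := by
  simp only [availableColors, Set.mem_ofPred_eq, forall_not_adj_erGraph_iff, erMeasure,
    Measure.real, measure_pi_bernoulliBool_forall_eq_false hp0 hp1, ENNReal.toReal_pow,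
    ENNReal.toReal_ofReal (sub_nonneg.2 hp1)]
  exact pow_le_pow_of_le_one (sub_nonneg.2 hp1) (sub_le_self _ hp0) (card_edgesTo_le v (C i))

theorem iIndepSet_mem_availableColors {ι : Type*} {C : ι → Finset (Fin n)}
    (hC : Pairwise (Function.onFun Disjoint C)) (hp0 : 0 ≤ p) (hp1 : p ≤ 1)
    {B : Finset (Fin n)} {D : Set ι} (hBD : ∀ i ∈ D, Disjoint B (C i)) :
    iIndepSet (fun x : B × D => {ω | ↑x.2 ∈ availableColors C (erGraph n ω) x.1})
      (erMeasure n p) := by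
  simp only [availableColors, Set.mem_ofPred_eq, forall_not_adj_erGraph_iff]
  refine iIndepSet_forall_eq_false hp0 hp1 ?_
  rintro ⟨v, i⟩ ⟨w, j⟩ hne
  refine disjoint_edgesTo (Finset.disjoint_left.1 (hBD j j.2) v.2) fun hvw => hC ?_
  rintro hij
  exact hne (Prod.ext (Subtype.ext hvw) (Subtype.ext hij))

theorem measureReal_subset_dangerousVertices_le {ι : Type*} [Finite ι] {C : ι → Finset (Fin n)}
    (hC : Pairwise (Function.onFun Disjoint C)) (hp0 : 0 ≤ p) (hp1 : p ≤ 1)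
    {B : Finset (Fin n)} {D : Set ι} (hBD : ∀ i ∈ D, Disjoint B (C i)) {q : ℝ}
    (hq : ∀ i ∈ D, q ≤ (1 - p) ^ (C i).card) (t : ℝ) :
    (erMeasure n p).real {ω | ↑B ⊆ dangerousVertices C (erGraph n ω) t} ≤
      Real.exp (B.card * (t * Real.log 2 - D.ncard * q / 2)) := by
  have := isProbabilityMeasure_erMeasure (n := n) hp0 hp1
  have hchernoff := measureReal_ncard_le_le_exp (fun _ => Set.Finite.measurableSet (Set.toFinite _))
    (iIndepSet_mem_availableColors hC hp0 hp1 hBD) (Real.log_nonneg one_le_two)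
    (fun x => (hq x.2 x.2.2).trans (le_measureReal_mem_availableColors C x.2 hp0 hp1 x.1))
    (B.card * t)
  refine (measureReal_mono fun ω hω => ncard_mem_availableColors_le hω D).trans
    (hchernoff.trans_eq ?_)
  rw [Real.exp_neg, Real.exp_log two_pos, Nat.card_prod, Nat.card_coe_set_eq,
    Nat.card_eq_fintype_card, Fintype.card_coe]
  push_cast
  ring_nf

theorem measureReal_subset_dangerousVertices_le_of_le_ncard_smallColors {ι : Type*} [Finite ι]
    {C : ι → Finset (Fin n)} (hC : Pairwise (Function.onFun Disjoint C)) (hp0 : 0 ≤ p)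
    (hp1 : p ≤ 1) {q s M : ℝ} (hq0 : 0 ≤ q) (hq : ∀ m : ℕ, (m : ℝ) ≤ s → q ≤ (1 - p) ^ m)
    (hM : M ≤ (smallColors C s).ncard) (B : Finset (Fin n)) (t : ℝ) :
    (erMeasure n p).real {ω | ↑B ⊆ dangerousVertices C (erGraph n ω) t} ≤
      Real.exp (B.card * (t * Real.log 2 - (M - B.card) * q / 2)) := by
  have hD := (sub_le_sub_right hM _).trans (sub_card_le_ncard_smallColors_inter_disjoint hC B s)
  refine (measureReal_subset_dangerousVertices_le hC hp0 hp1
    (D := smallColors C s ∩ {i | Disjoint B (C i)}) (fun i hi => hi.2)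
    (fun i hi => hq _ hi.1) t).trans (Real.exp_le_exp.2 ?_)
  gcongr

/-- The event that `erGraph n ω` has a partial coloring with colors `ι`, at least `γ` vertices of
which see fewer than `t` available colors, and at least `M` classes of which have at most `s`
vertices. Neither active colors nor the level `ℓ(𝒞)` are part of it. -/
def dangerousEvent (ι : Type*) (n : ℕ) (γ t M s : ℝ) : Set (EdgeIdx n → Bool) :=
  {ω | ∃ C : ι → Finset (Fin n), Pairwise (Function.onFun Disjoint C) ∧
    γ ≤ (dangerousVertices C (erGraph n ω) t).ncard ∧ M ≤ (smallColors C s).ncard}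

open Classical in
theorem dangerousEvent_subset_iUnion (ι : Type*) [Fintype ι] (n : ℕ) (γ t M s : ℝ) :
    dangerousEvent ι n γ t M s ⊆
      ⋃ x ∈ ({x | M ≤ (smallColors (colorClass x.1) s).ncard ∧ x.2.card = ⌈γ⌉₊} :
        Finset ((Fin n → Option ι) × Finset (Fin n))),
      {ω | ↑x.2 ⊆ dangerousVertices (colorClass x.1) (erGraph n ω) t} := by
  rintro ω ⟨C, hC, hγ, hM⟩
  obtain ⟨c, rfl⟩ := exists_colorClass_eq hC
  rw [Set.ncard_eq_toFinset_card', ← Nat.ceil_le] at hγ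
  obtain ⟨B, hB, hBγ⟩ := Finset.exists_subset_card_eq hγ
  exact Set.mem_biUnion (x := (c, B)) (by simp [hM, hBγ]) (by simpa [← Finset.coe_subset] using hB)

theorem measureReal_dangerousEvent_le (ι : Type*) [Fintype ι] (hp0 : 0 ≤ p) (hp1 : p ≤ 1)
    {q s : ℝ} (hq0 : 0 ≤ q) (hq : ∀ m : ℕ, (m : ℝ) ≤ s → q ≤ (1 - p) ^ m) (γ t M : ℝ) :
    (erMeasure n p).real (dangerousEvent ι n γ t M s) ≤ (2 * (Fintype.card ι + 1)) ^ n *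
      Real.exp (⌈γ⌉₊ * (t * Real.log 2 - (M - ⌈γ⌉₊) * q / 2)) := by
  classical
  have := isProbabilityMeasure_erMeasure (n := n) hp0 hp1
  let choices : Finset ((Fin n → Option ι) × Finset (Fin n)) :=
    {x | M ≤ (smallColors (colorClass x.1) s).ncard ∧ x.2.card = ⌈γ⌉₊}
  have hchoice : ∀ x ∈ choices,
      (erMeasure n p).real {ω | ↑x.2 ⊆ dangerousVertices (colorClass x.1) (erGraph n ω) t} ≤
        Real.exp (⌈γ⌉₊ * (t * Real.log 2 - (M - ⌈γ⌉₊) * q / 2)) := fun ⟨c, B⟩ hx => by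
    obtain ⟨hM, hB⟩ := (Finset.mem_filter_univ _).1 hx
    exact hB ▸ measureReal_subset_dangerousVertices_le_of_le_ncard_smallColors
      (pairwise_disjoint_colorClass c) hp0 hp1 hq0 hq hM B t
  calc (erMeasure n p).real (dangerousEvent ι n γ t M s)
      ≤ ∑ x ∈ choices, (erMeasure n p).real
          {ω | ↑x.2 ⊆ dangerousVertices (colorClass x.1) (erGraph n ω) t} :=
        (measureReal_mono (dangerousEvent_subset_iUnion ι n γ t M s)
          (measure_ne_top _ _)).trans (measureReal_biUnion_finset_le _ _)
    _ ≤ choices.card * Real.exp (⌈γ⌉₊ * (t * Real.log 2 - (M - ⌈γ⌉₊) * q / 2)) := by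
        simpa using Finset.sum_le_card_nsmul _ _ _ hchoice
    _ ≤ (2 * (Fintype.card ι + 1)) ^ n *
          Real.exp (⌈γ⌉₊ * (t * Real.log 2 - (M - ⌈γ⌉₊) * q / 2)) := by
        gcongr
        exact_mod_cast (Finset.card_le_univ choices).trans_eq (by simp [mul_pow, mul_comm])

end RandomGraph

section Parameters

variable {α ξ h ε P : ℝ} {n : ℕ}

theorem le_log_one_div_one_sub (hP1 : P < 1) : P ≤ Real.log (1 / (1 - P)) := by
  rw [one_div, Real.log_inv]
  linarith [Real.log_le_sub_one_of_pos (sub_pos.2 hP1)]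

theorem logbNP_pos (hP0 : 0 < P) (hP1 : P < 1) (hnP : 1 < n * P) : 0 < logbNP n P :=
  div_pos (Real.log_pos hnP) (hP0.trans_le (le_log_one_div_one_sub hP1))

theorem rpow_neg_le_one_sub_pow (hP0 : 0 < P) (hP1 : P < 1) (hnP : 1 < n * P) {m : ℕ}
    (hm : m ≤ h * logbNP n P) : (n * P) ^ (-h) ≤ (1 - P) ^ m := by
  have hlog : 0 < Real.log (1 / (1 - P)) := hP0.trans_le (le_log_one_div_one_sub hP1)
  rw [logbNP, ← mul_div_assoc, le_div_iff₀ hlog, one_div, Real.log_inv] at hm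
  rw [← Real.log_le_log_iff (by positivity) (pow_pos (sub_pos.2 hP1) m),
    Real.log_rpow (by positivity), Real.log_pow]
  linarith

/-- The number `(ξ/10)·k = (ξ/10)·α·n / log_b(np)` of small color classes that the event asks
for. -/
noncomputable def smallCountKS (α ξ : ℝ) (n : ℕ) (P : ℝ) : ℝ :=
  ξ / 10 * (α * n / logbNP n P)

theorem betaKS_eq_smallCountKS_mul : betaKS α ξ h n P = smallCountKS α ξ n P * (n * P) ^ (-h) := by
  rw [betaKS, smallCountKS]
  ring

theorem smallCountKS_pos (hα : 0 < α) (hξ : 0 < ξ) (hP0 : 0 < P) (hP1 : P < 1)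
    (hnP : 1 < n * P) : 0 < smallCountKS α ξ n P := by
  have hn : (0 : ℝ) < n := pos_of_mul_pos_left (one_pos.trans hnP) hP0.le
  have hL := logbNP_pos hP0 hP1 hnP
  rw [smallCountKS]
  positivity

theorem mul_le_smallCountKS_mul_log (hα : 0 < α) (hξ : 0 < ξ) (hP0 : 0 < P) (hP1 : P < 1)
    (hnP : 1 < n * P) : ξ * α / 10 * (n * P) ≤ smallCountKS α ξ n P * Real.log n := by
  have hn : (0 : ℝ) < n := pos_of_mul_pos_left (one_pos.trans hnP) hP0.le
  have hL := logbNP_pos hP0 hP1 hnP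
  have hlog : P * logbNP n P ≤ Real.log n := by
    calc P * logbNP n P ≤ Real.log (1 / (1 - P)) * logbNP n P := by
          gcongr
          exact le_log_one_div_one_sub hP1
      _ = Real.log (n * P) := mul_div_cancel₀ _ (hP0.trans_le (le_log_one_div_one_sub hP1)).ne'
      _ ≤ Real.log n := Real.log_le_log (one_pos.trans hnP) (mul_le_of_le_one_right hn.le hP1.le)
  calc ξ * α / 10 * (n * P) = smallCountKS α ξ n P * (P * logbNP n P) := by
        rw [smallCountKS]
        field_simp
    _ ≤ smallCountKS α ξ n P * Real.log n := by
        gcongr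
        exact (smallCountKS_pos hα hξ hP0 hP1 hnP).le

theorem gammaKS_mul_betaKS (hβ : betaKS α ξ h n P ≠ 0) :
    gammaKS α ξ h n P * betaKS α ξ h n P = 10 * n * Real.log n :=
  div_mul_cancel₀ _ hβ

theorem rpow_one_sub_le_mul (hn : n ≠ 0) (hP : (n : ℝ) ^ (-ε) ≤ P) :
    (n : ℝ) ^ (1 - ε) ≤ n * P := by
  rw [sub_eq_add_neg, Real.rpow_add (by positivity), Real.rpow_one]
  gcongr

theorem gammaKS_mul_rpow_le (hα : 0 < α) (hξ : 0 < ξ) (hh : h ≤ 2) (hP0 : 0 < P) (hP1 : P < 1)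
    (hnP : 1 < n * P) (hP : (n : ℝ) ^ (-ε) ≤ P) :
    gammaKS α ξ h n P * ((ξ * α / 10) ^ 2 * (n : ℝ) ^ ((1 - ε) * (2 - h) - 1)) ≤
      10 * Real.log n ^ 3 * smallCountKS α ξ n P := by
  have hn : (0 : ℝ) < n := pos_of_mul_pos_left (one_pos.trans hnP) hP0.le
  have hM := smallCountKS_pos hα hξ hP0 hP1 hnP
  have hpow : n * (n : ℝ) ^ ((1 - ε) * (2 - h) - 1) ≤ (n * P) ^ 2 * (n * P) ^ (-h) := by
    calc n * (n : ℝ) ^ ((1 - ε) * (2 - h) - 1) = ((n : ℝ) ^ (1 - ε)) ^ (2 - h) := by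
          rw [Real.rpow_sub_one hn.ne', mul_div_cancel₀ _ hn.ne', Real.rpow_mul hn.le]
      _ ≤ (n * P) ^ (2 - h) := Real.rpow_le_rpow (by positivity)
          (rpow_one_sub_le_mul (by exact_mod_cast hn.ne') hP) (by linarith)
      _ = (n * P) ^ 2 * (n * P) ^ (-h) := by
          rw [sub_eq_add_neg, Real.rpow_add (by positivity), Real.rpow_two]
  rw [gammaKS, betaKS_eq_smallCountKS_mul, div_mul_eq_mul_div, div_le_iff₀ (by positivity)]
  calc 10 * n * Real.log n * ((ξ * α / 10) ^ 2 * (n : ℝ) ^ ((1 - ε) * (2 - h) - 1))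
      = 10 * Real.log n * (ξ * α / 10) ^ 2 * (n * (n : ℝ) ^ ((1 - ε) * (2 - h) - 1)) := by ring
    _ ≤ 10 * Real.log n * (ξ * α / 10) ^ 2 * ((n * P) ^ 2 * (n * P) ^ (-h)) := by gcongr
    _ = 10 * Real.log n * (ξ * α / 10 * (n * P)) ^ 2 * (n * P) ^ (-h) := by ring
    _ ≤ 10 * Real.log n * (smallCountKS α ξ n P * Real.log n) ^ 2 * (n * P) ^ (-h) := by
        gcongr ?_ * ?_ ^ 2 * ?_
        exact mul_le_smallCountKS_mul_log hα hξ hP0 hP1 hnP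
    _ = 10 * Real.log n ^ 3 * smallCountKS α ξ n P *
          (smallCountKS α ξ n P * (n * P) ^ (-h)) := by ring

theorem chernoff_exponent_le_neg_mul_log (hβ : 0 < betaKS α ξ h n P) {b : ℝ}
    (hγb : gammaKS α ξ h n P ≤ b) (hb0 : 0 ≤ b) (hb : b ≤ 1 / 100 * smallCountKS α ξ n P)
    (hnP : 0 ≤ n * P) :
    b * (betaKS α ξ h n P / 2 * Real.log 2 - (smallCountKS α ξ n P - b) * (n * P) ^ (-h) / 2) ≤
      -(1.4 * (n * Real.log n)) := by
  have hβeq := betaKS_eq_smallCountKS_mul (α := α) (ξ := ξ) (h := h) (n := n) (P := P)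
  have hγβ := gammaKS_mul_betaKS hβ.ne'
  set β := betaKS α ξ h n P
  set M := smallCountKS α ξ n P
  set q := ((n : ℝ) * P) ^ (-h)
  have hlog : β * Real.log 2 ≤ β * 0.7 := by
    gcongr
    linarith [Real.log_two_lt_d9]
  have hbq : b * q ≤ 1 / 100 * β := by
    rw [hβeq, ← mul_assoc]
    gcongr
  calc b * (β / 2 * Real.log 2 - (M - b) * q / 2)
      = b * ((β * Real.log 2 - β + b * q) / 2) := by rw [hβeq]; ring
    _ ≤ b * (-(0.14 * β)) := by
        gcongr
        linarith
    _ ≤ -(1.4 * (n * Real.log n)) := by linarith [mul_le_mul_of_nonneg_right hγb hβ.le]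

/-- The event `dangerousEvent` with the number of colors and the thresholds `γ(h)`, `β(h) / 2`,
`(ξ/10)·k` and `h·log_b(np)` of Keusch and Steger. -/
def dangerousEventKS (α ξ h : ℝ) (n : ℕ) (P : ℝ) : Set (EdgeIdx n → Bool) :=
  dangerousEvent (Fin ⌈α * n / logbNP n P⌉₊) n (gammaKS α ξ h n P) (betaKS α ξ h n P / 2)
    (smallCountKS α ξ n P) (h * logbNP n P)

theorem measureReal_dangerousEventKS_le (hα : 0 < α) (hξ : 0 < ξ) (hP0 : 0 < P) (hP1 : P < 1)
    (hnP : 1 < n * P) (hγ : (⌈gammaKS α ξ h n P⌉₊ : ℝ) ≤ 1 / 100 * smallCountKS α ξ n P) :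
    (erMeasure n P).real (dangerousEventKS α ξ h n P) ≤
      (2 * (⌈α * n / logbNP n P⌉₊ + 1) : ℕ) ^ n * Real.exp (-(1.4 * (n * Real.log n))) := by
  have hβ : 0 < betaKS α ξ h n P := by
    rw [betaKS_eq_smallCountKS_mul]
    exact mul_pos (smallCountKS_pos hα hξ hP0 hP1 hnP) (by positivity)
  refine (measureReal_dangerousEvent_le _ hP0.le hP1.le (by positivity)
    (fun m hm => rpow_neg_le_one_sub_pow hP0 hP1 hnP hm) _ _ _).trans ?_
  rw [Fintype.card_fin]
  push_cast
  gcongr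
  exact chernoff_exponent_le_neg_mul_log hβ (Nat.le_ceil _) (Nat.cast_nonneg _) hγ (by positivity)

end Parameters

section Asymptotics

variable {α ξ h η ε : ℝ} {p : ℕ → ℝ}

theorem eventually_pos_of_rpow_le (hp : ∀ᶠ n : ℕ in atTop, (n : ℝ) ^ (-ε) ≤ p n) :
    ∀ᶠ n in atTop, 0 < p n := by
  filter_upwards [hp, eventually_gt_atTop 0] with n hn hn0
  exact (by positivity : (0 : ℝ) < (n : ℝ) ^ (-ε)).trans_le hn

theorem tendsto_mul_atTop_of_rpow_le (hε : ε < 1)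
    (hp : ∀ᶠ n : ℕ in atTop, (n : ℝ) ^ (-ε) ≤ p n) :
    Tendsto (fun n => n * p n) atTop atTop := by
  refine tendsto_atTop_mono' _ ?_
    ((tendsto_rpow_atTop (sub_pos.2 hε)).comp tendsto_natCast_atTop_atTop)
  filter_upwards [hp, eventually_ne_atTop 0] with n hn hn0
  exact rpow_one_sub_le_mul hn0 hn

theorem tendsto_logbNP_atTop (hη : 0 < η) (hp0 : ∀ᶠ n in atTop, 0 < p n)
    (hp1 : ∀ᶠ n in atTop, p n ≤ 1 - η) (hnp : Tendsto (fun n => n * p n) atTop atTop) :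
    Tendsto (fun n => logbNP n (p n)) atTop atTop := by
  have hη1 : η < 1 := by
    obtain ⟨n, hn0, hn1⟩ := (hp0.and hp1).exists
    linarith
  have hlogη : 0 < Real.log (1 / η) := Real.log_pos (one_lt_one_div hη hη1)
  refine tendsto_atTop_mono' _ ?_ ((Real.tendsto_log_atTop.comp hnp).atTop_div_const hlogη)
  filter_upwards [hp0, hp1, hnp.eventually_ge_atTop 1] with n hn0 hn1 hnp1
  have hpη : η ≤ 1 - p n := by linarith
  have hlogp : 0 < Real.log (1 / (1 - p n)) :=
    hn0.trans_le (le_log_one_div_one_sub (by linarith))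
  exact div_le_div_of_nonneg_left (Real.log_nonneg hnp1) hlogp
    (Real.log_le_log (one_div_pos.2 (hη.trans_le hpη)) (one_div_le_one_div_of_le hη hpη))

theorem eventually_two_mul_ceil_add_one_le (hα : 0 < α)
    (hL : Tendsto (fun n => logbNP n (p n)) atTop atTop) :
    ∀ᶠ n : ℕ in atTop, 2 * (⌈α * n / logbNP n (p n)⌉₊ + 1) ≤ n := by
  filter_upwards [hL.eventually_ge_atTop (4 * α), eventually_ge_atTop 8] with n hn hn8
  have hL0 : 0 < logbNP n (p n) := by linarith
  have hceil := Nat.ceil_lt_add_one (show 0 ≤ α * n / logbNP n (p n) by positivity)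
  have hdiv : α * n / logbNP n (p n) ≤ n / 4 := by
    rw [div_le_div_iff₀ hL0 four_pos]
    linarith [mul_le_mul_of_nonneg_left hn n.cast_nonneg]
  have hn8' : (8 : ℝ) ≤ n := by exact_mod_cast hn8
  have hreal : 2 * ((⌈α * n / logbNP n (p n)⌉₊ : ℝ) + 1) ≤ n := by linarith
  exact_mod_cast hreal

theorem tendsto_smallCountKS_atTop (hα : 0 < α) (hξ : 0 < ξ) (hε : ε < 1)
    (hp : ∀ᶠ n : ℕ in atTop, (n : ℝ) ^ (-ε) ≤ p n) (hp1 : ∀ᶠ n in atTop, p n < 1) :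
    Tendsto (fun n => smallCountKS α ξ n (p n)) atTop atTop := by
  have hratio : Tendsto (fun n : ℕ => (n : ℝ) ^ (1 - ε) / Real.log n) atTop atTop := by
    have hlittle : Tendsto (fun n : ℕ => Real.log n / (n : ℝ) ^ (1 - ε)) atTop (𝓝[>] 0) := by
      refine tendsto_nhdsWithin_iff.2 ⟨((isLittleO_log_rpow_atTop (sub_pos.2 hε)).comp_tendsto
        tendsto_natCast_atTop_atTop).tendsto_div_nhds_zero, ?_⟩
      filter_upwards [eventually_gt_atTop 1] with n hn
      exact div_pos (Real.log_pos (by exact_mod_cast hn)) (by positivity)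
    exact hlittle.inv_tendsto_nhdsGT_zero.congr fun n => inv_div _ _
  refine tendsto_atTop_mono' _ ?_ (hratio.const_mul_atTop (show 0 < ξ * α / 10 by positivity))
  filter_upwards [hp, eventually_pos_of_rpow_le hp, hp1,
    (tendsto_mul_atTop_of_rpow_le hε hp).eventually_gt_atTop 1, eventually_gt_atTop 1]
    with n hn hn0 hn1 hnp hn2
  rw [← mul_div_assoc, div_le_iff₀ (Real.log_pos (by exact_mod_cast hn2))]
  refine le_trans ?_ (mul_le_smallCountKS_mul_log hα hξ hn0 hn1 hnp)
  gcongr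
  exact rpow_one_sub_le_mul (by lia) hn

theorem eventually_gammaKS_le (hα : 0 < α) (hξ : 0 < ξ) (hh : h < 1)
    (hε : (2 - h) * ε < 1 - h) (hp : ∀ᶠ n : ℕ in atTop, (n : ℝ) ^ (-ε) ≤ p n)
    (hp1 : ∀ᶠ n in atTop, p n < 1) {δ : ℝ} (hδ : 0 < δ) :
    ∀ᶠ n in atTop, gammaKS α ξ h n (p n) ≤ δ * smallCountKS α ξ n (p n) := by
  have hε1 : ε < 1 := by nlinarith
  have hρ : 0 < (1 - ε) * (2 - h) - 1 := by linarith
  set ρ := (1 - ε) * (2 - h) - 1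
  set c := (ξ * α / 10) ^ 2
  have hc : 0 < c := by positivity
  have hlog : ∀ᶠ n : ℕ in atTop, 10 * Real.log n ^ 3 ≤ δ * (c * (n : ℝ) ^ ρ) := by
    have hlittle := (isLittleO_log_rpow_rpow_atTop 3 hρ).comp_tendsto tendsto_natCast_atTop_atTop
    filter_upwards [hlittle.bound (show 0 < δ * c / 10 by positivity)] with n hn
    simp only [Function.comp_apply, Real.norm_eq_abs] at hn
    rw [abs_of_nonneg (by positivity), abs_of_nonneg (by positivity)] at hn
    norm_cast at hn
    linarith
  filter_upwards [hlog, hp, eventually_pos_of_rpow_le hp, hp1,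
    (tendsto_mul_atTop_of_rpow_le hε1 hp).eventually_gt_atTop 1, eventually_gt_atTop 0]
    with n hlogn hpn hp0 hp1 hnp hn
  have hM := smallCountKS_pos hα hξ hp0 hp1 hnp
  refine le_of_mul_le_mul_right ?_ (mul_pos hc (show 0 < (n : ℝ) ^ ρ by positivity))
  calc gammaKS α ξ h n (p n) * (c * (n : ℝ) ^ ρ)
      ≤ 10 * Real.log n ^ 3 * smallCountKS α ξ n (p n) :=
        gammaKS_mul_rpow_le hα hξ (by linarith) hp0 hp1 hnp hpn
    _ ≤ δ * (c * (n : ℝ) ^ ρ) * smallCountKS α ξ n (p n) := by gcongr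
    _ = δ * smallCountKS α ξ n (p n) * (c * (n : ℝ) ^ ρ) := by ring

theorem eventually_ceil_gammaKS_le (hα : 0 < α) (hξ : 0 < ξ) (hh : h < 1)
    (hε : (2 - h) * ε < 1 - h) (hp : ∀ᶠ n : ℕ in atTop, (n : ℝ) ^ (-ε) ≤ p n)
    (hp1 : ∀ᶠ n in atTop, p n < 1) {δ : ℝ} (hδ : 0 < δ) :
    ∀ᶠ n in atTop, (⌈gammaKS α ξ h n (p n)⌉₊ : ℝ) ≤ δ * smallCountKS α ξ n (p n) := by
  have hM := tendsto_smallCountKS_atTop hα hξ (by nlinarith) hp hp1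
  filter_upwards [eventually_gammaKS_le hα hξ hh hε hp hp1 (half_pos hδ),
    hM.eventually_ge_atTop (2 / δ)] with n hγ hM2
  have hM1 : 1 ≤ δ / 2 * smallCountKS α ξ n (p n) := by
    rw [div_le_iff₀ hδ] at hM2
    linarith
  calc (⌈gammaKS α ξ h n (p n)⌉₊ : ℝ)
      ≤ ⌈δ / 2 * smallCountKS α ξ n (p n)⌉₊ := by gcongr
    _ ≤ δ / 2 * smallCountKS α ξ n (p n) + 1 := (Nat.ceil_lt_add_one (by linarith)).le
    _ ≤ δ * smallCountKS α ξ n (p n) := by linarith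

theorem eventually_pow_mul_exp_le : ∀ᶠ n : ℕ in atTop, ∀ m : ℕ, m ≤ n →
    (m : ℝ) ^ n * Real.exp (-(1.4 * (n * Real.log n))) ≤ Real.exp (-n) := by
  have hlog := Real.tendsto_log_atTop.comp (tendsto_natCast_atTop_atTop (R := ℝ))
  filter_upwards [hlog.eventually_ge_atTop 2.5, eventually_gt_atTop 0] with n hn hn0 m hm
  rw [Function.comp_apply] at hn
  calc (m : ℝ) ^ n * Real.exp (-(1.4 * (n * Real.log n)))
      ≤ (n : ℝ) ^ n * Real.exp (-(1.4 * (n * Real.log n))) := by gcongr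
    _ = Real.exp (-(n * (0.4 * Real.log n))) := by
        rw [← Real.exp_log (show (0 : ℝ) < (n : ℝ) ^ n by positivity), Real.log_pow,
          ← Real.exp_add]
        ring_nf
    _ ≤ Real.exp (-n) := by
        gcongr
        exact le_mul_of_one_le_right n.cast_nonneg (by linarith)

theorem eventually_measureReal_dangerousEventKS_le (hα : 0 < α) (hξ : 0 < ξ) (hh : h < 1)
    (hε : (2 - h) * ε < 1 - h) (hη : 0 < η) (hp : ∀ᶠ n : ℕ in atTop, (n : ℝ) ^ (-ε) ≤ p n)
    (hp1 : ∀ᶠ n in atTop, p n ≤ 1 - η) :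
    ∀ᶠ n : ℕ in atTop,
      (erMeasure n (p n)).real (dangerousEventKS α ξ h n (p n)) ≤ Real.exp (-n) := by
  have hp0 := eventually_pos_of_rpow_le hp
  have hplt : ∀ᶠ n in atTop, p n < 1 := hp1.mono fun n hn => by linarith
  have hnp := tendsto_mul_atTop_of_rpow_le (by nlinarith) hp
  filter_upwards [hp0, hplt, hnp.eventually_gt_atTop 1,
    eventually_ceil_gammaKS_le hα hξ hh hε hp hplt (show (0 : ℝ) < 1 / 100 by norm_num),
    eventually_two_mul_ceil_add_one_le hα (tendsto_logbNP_atTop hη hp0 hp1 hnp),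
    eventually_pow_mul_exp_le] with n hp0 hp1 hnp hγ hk hexp
  exact (measureReal_dangerousEventKS_le hα hξ hp0 hp1 hnp hγ).trans (hexp _ hk)

theorem eventually_rpow_neg_le_of_tendsto_log_div_log (hp0 : ∀ᶠ n in atTop, 0 < p n) (hε : 0 < ε)
    (hpbig : Tendsto (fun n => Real.log (1 / p n) / Real.log n) atTop (𝓝 0)) :
    ∀ᶠ n : ℕ in atTop, (n : ℝ) ^ (-ε) ≤ p n := by
  filter_upwards [hpbig.eventually_lt_const hε, hp0, eventually_gt_atTop 1] with n hlt hp0 hn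
  have hn1 : (1 : ℝ) < n := by exact_mod_cast hn
  rw [div_lt_iff₀ (Real.log_pos hn1), one_div, Real.log_inv] at hlt
  rw [← Real.log_le_log_iff (by positivity) hp0, Real.log_rpow (by positivity)]
  linarith

end Asymptotics

theorem dangerous_vertices_event_whp_general {α ξ h η ε : ℝ} (hα : 0 < α) (hξ : 0 < ξ)
    (hh : h < 1) (hε : (2 - h) * ε < 1 - h) (hη : 0 < η) {p : ℕ → ℝ}
    (hp : ∀ᶠ n : ℕ in atTop, (n : ℝ) ^ (-ε) ≤ p n) (hp1 : ∀ᶠ n in atTop, p n ≤ 1 - η) :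
    Tendsto (fun n => erMeasure n (p n) (dangerousEventKS α ξ h n (p n))) atTop (nhds 0) := by
  have hexp : Tendsto (fun n : ℕ => ENNReal.ofReal (Real.exp (-n))) atTop (nhds 0) := by
    simpa using ENNReal.tendsto_ofReal
      (Real.tendsto_exp_neg_atTop_nhds_zero.comp tendsto_natCast_atTop_atTop)
  refine tendsto_of_tendsto_of_tendsto_of_le_of_le' tendsto_const_nhds hexp
    (.of_forall fun _ => zero_le) ?_
  filter_upwards [eventually_measureReal_dangerousEventKS_le hα hξ hh hε hη hp hp1,
    eventually_pos_of_rpow_le hp, hp1] with n hn hp0 hp1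
  have := isProbabilityMeasure_erMeasure (n := n) hp0.le (by linarith)
  rwa [← ofReal_measureReal, ENNReal.ofReal_le_ofReal_iff (Real.exp_pos _).le]

/-- Lemma 8, `l:sudakov`, of Keusch–Steger. With high
probability there is no partial coloring `𝒞` with small level
`ℓ(𝒞) ≤ (h-ξ)·log_b(np)`, many dangerous vertices (`|B(h,𝒞)| ≥ γ(h)`), and at
least `(ξ/10)·k` color classes of size at most `ℓ(𝒞) + ξ·log_b(np)`. -/
theorem dangerous_vertices_event_whp
    (η : ℝ) (hη0 : 0 < η) (hη1 : η < 1)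
    (α : ℝ) (hα : 1 < α) (ξ : ℝ) (hξ : ξ = (1 - 1 / α) / 10)
    (h : ℝ) (hh : h < 1)
    (p : ℕ → ℝ) (hp0 : ∀ n, 0 < p n) (hp1 : ∀ n, p n ≤ 1 - η)
    (hpbig : Tendsto (fun n => Real.log (1 / p n) / Real.log n) atTop (nhds 0)) :
    Tendsto (fun n =>
        erMeasure n (p n) {ω : EdgeIdx n → Bool |
          -- a partial coloring with `k = α·n/log_b(np)` colors: pairwise
          -- disjoint (possibly empty) color classes
          ∃ C : Fin ⌈α * n / logbNP n (p n)⌉₊ → Finset (Fin n),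
            (∀ i j, i ≠ j → Disjoint (C i) (C j)) ∧
            -- `ℓ` is the minimum size of an active color class
            -- (a color `i` is active iff some uncolored `v` has no neighbor in `C i`)
            ∃ ℓ : ℕ,
              (∃ i, (∃ v : Fin n, (∀ j, v ∉ C j) ∧ ∀ u ∈ C i, ¬ (erGraph n ω).Adj v u) ∧
                (C i).card = ℓ) ∧
              (∀ i, (∃ v : Fin n, (∀ j, v ∉ C j) ∧ ∀ u ∈ C i, ¬ (erGraph n ω).Adj v u) →
                ℓ ≤ (C i).card) ∧
              -- the level is small
              (ℓ : ℝ) ≤ (h - ξ) * logbNP n (p n) ∧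
              -- many dangerous vertices: `a(v,𝒞) < β(h)/2` for at least `γ(h)` vertices
              gammaKS α ξ h n (p n) ≤
                (({v : Fin n |
                    (({i | ∀ u ∈ C i, ¬ (erGraph n ω).Adj v u}.ncard : ℕ) : ℝ) <
                      betaKS α ξ h n (p n) / 2}.ncard : ℕ) : ℝ) ∧
              -- at least `(ξ/10)·k` color classes have size at most `ℓ + ξ·log_b(np)`
              (ξ / 10) * (α * n / logbNP n (p n)) ≤
                (({i | ((C i).card : ℝ) ≤ (ℓ : ℝ) + ξ * logbNP n (p n)}.ncard : ℕ) : ℝ)})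
      atTop (nhds 0) := by
  have hξ0 : 0 < ξ := by linarith [(div_lt_one (one_pos.trans hα)).2 hα]
  obtain ⟨ε, hε0, hε⟩ := exists_pos_mul_lt (sub_pos.2 hh) (2 - h)
  have hp := eventually_rpow_neg_le_of_tendsto_log_div_log (.of_forall hp0) hε0 hpbig
  refine tendsto_of_tendsto_of_tendsto_of_le_of_le tendsto_const_nhds
    (dangerous_vertices_event_whp_general (one_pos.trans hα) hξ0 hh hε hη0 hp (.of_forall hp1))
    (fun _ => zero_le) fun n => measure_mono ?_
  rintro ω ⟨C, hC, ℓ, -, -, hℓ, hγ, hM⟩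
  refine ⟨C, fun i j => hC i j, hγ, hM.trans ?_⟩
  exact_mod_cast Set.ncard_le_ncard (smallColors_mono C (by linarith)) (Set.toFinite _)
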